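/- Let ε > 0 and let (f_n) be a family of Boolean functions f_n : {±1}^n → {±1} that is high-degree, i.e., for every fixed k the Fourier weight W^{≤k}(f_n) is negligible. Let f̄_n denote the N-extension of f_n for N = n^{1+ε}. Then the cross-predictability CP(orb(f̄_n), U^N), where orb(f̄_n) is the uniform distribution on the orbit of f̄_n under coordinate permutations and U^N is uniform on {±1}^N, is negligible. -/

import Mathlib

open MeasureTheory ProbabilityTheory Filter Finset Asymptotics
open scoped NNReal ENNReal

noncomputable section

/-- The ±1 value encoded by a Boolean bit. -/
def bsign (b : Bool) : ℝ := if b then 1 else -1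

/-- Expectation over a uniformly random point of the Boolean cube `{±1}^n`. -/
def bExp (n : ℕ) (g : (Fin n → Bool) → ℝ) : ℝ :=
  (∑ x : Fin n → Bool, g x) / 2 ^ n

/-- A function on the Boolean cube is Boolean(-valued) if it takes values in `{±1}`. -/
def IsBooleanFn {n : ℕ} (f : (Fin n → Bool) → ℝ) : Prop := ∀ x, f x = 1 ∨ f x = -1

/-- Initialization distribution: the weights `w : ℝⁿ` and the bias `b` are
iid `N(0, 1/n)` Gaussians. -/
def initMeasure (n : ℕ) : Measure ((Fin n → ℝ) × ℝ) :=
  (Measure.pi fun _ : Fin n => gaussianReal 0 (n : ℝ≥0)⁻¹).prod (gaussianReal 0 (n : ℝ≥0)⁻¹)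

/-- Initial alignment `INAL(f, σ) = E_{w,b} [ (E_x [f(x) σ(wᵀx + b)])² ]`. -/
def INAL (n : ℕ) (f : (Fin n → Bool) → ℝ) (σ : ℝ → ℝ) : ℝ :=
  ∫ θ : (Fin n → ℝ) × ℝ,
    (bExp n fun x => f x * σ (∑ i, θ.1 i * bsign (x i) + θ.2)) ^ 2 ∂ initMeasure n

/-- The `v`-Gaussian smoothing `Σ_v(t) = E_{Y ∼ N(0,v)} [σ(Y + t)]`. -/
def gsmooth (σ : ℝ → ℝ) (v : ℝ) (t : ℝ) : ℝ :=
  ∫ y, σ (y + t) ∂ gaussianReal 0 v.toNNReal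

/-- `σ` is polynomially bounded: `|σ(x)| ≤ C |x|^c + C` for some `C, c > 0`. -/
def PolyBounded (σ : ℝ → ℝ) : Prop :=
  ∃ C : ℝ, 0 < C ∧ ∃ c : ℕ, 0 < c ∧ ∀ x : ℝ, |σ x| ≤ C * |x| ^ c + C

/-- `σ` is expressive: measurable, polynomially bounded, and its Gaussian smoothing has no
two consecutive vanishing derivatives at `0`. -/
def Expressive (σ : ℝ → ℝ) : Prop :=
  Measurable σ ∧ PolyBounded σ ∧
    ∀ m : ℕ, iteratedDeriv m (gsmooth σ 1) 0 ≠ 0 ∨ iteratedDeriv (m + 1) (gsmooth σ 1) 0 ≠ 0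

/-- A nonnegative sequence is negligible if it decays faster than any inverse polynomial. -/
def Negligible (g : ℕ → ℝ) : Prop :=
  ∀ c : ℕ, Tendsto (fun n : ℕ => (n : ℝ) ^ c * g n) atTop (nhds 0)

/-- Fourier character `M_S(x) = ∏_{i ∈ S} x_i`. -/
def chi {n : ℕ} (S : Finset (Fin n)) (x : Fin n → Bool) : ℝ := ∏ i ∈ S, bsign (x i)

/-- Fourier coefficient `f̂(S) = E_x [f(x) M_S(x)]`. -/
def fourierCoef (n : ℕ) (f : (Fin n → Bool) → ℝ) (S : Finset (Fin n)) : ℝ :=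
  bExp n fun x => f x * chi S x

/-- Fourier weight up to degree `k`: `W^{≤k}(f)`. -/
def weightLE (n k : ℕ) (f : (Fin n → Bool) → ℝ) : ℝ :=
  ∑ S ∈ Finset.univ.filter (fun S : Finset (Fin n) => S.card ≤ k), fourierCoef n f S ^ 2

/-- Fourier weight strictly below degree `k`: `W^{<k}(f)`. -/
def weightLT (n k : ℕ) (f : (Fin n → Bool) → ℝ) : ℝ :=
  ∑ S ∈ Finset.univ.filter (fun S : Finset (Fin n) => S.card < k), fourierCoef n f S ^ 2

/-- The monomial `M_k(x) = ∏_{i=1}^k x_i`, viewed as a function on `{±1}^n`. -/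
def monomial (n k : ℕ) : (Fin n → Bool) → ℝ :=
  fun x => ∏ i ∈ Finset.univ.filter (fun i : Fin n => (i : ℕ) < k), bsign (x i)

/-- The `N`-extension of `f : {±1}^n → ℝ` (for `n ≤ N`): ignore the last `N - n` coordinates. -/
def extendFn (n N : ℕ) (f : (Fin n → Bool) → ℝ) : (Fin N → Bool) → ℝ :=
  fun x => f fun i => if h : (i : ℕ) < N then x ⟨i, h⟩ else false

/-- Cross-predictability of (the uniform distribution on) the orbit of `f` under coordinate
permutations, with uniform inputs: `CP(orb(f), U^N)`. -/
def orbitCP (N : ℕ) (f : (Fin N → Bool) → ℝ) : ℝ :=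
  (∑ π : Equiv.Perm (Fin N), ∑ π' : Equiv.Perm (Fin N),
      (bExp N fun x => f (fun i => x (π i)) * f (fun i => x (π' i))) ^ 2) /
    (Fintype.card (Equiv.Perm (Fin N))) ^ 2

/-- `N = n^{1+ε}` (rounded up). -/
def Ndim (ε : ℝ) (n : ℕ) : ℕ := ⌈(n : ℝ) ^ (1 + ε)⌉₊

/-!
The cross-predictability of the orbit of `f̄` is `E_σ (E_x [f̄(x) (f̄ ∘ σ)(x)])²` for a single
uniform permutation `σ`, and by Plancherel the inner expectation is `∑ T, a(σ T) a(T)`, with `a`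
the Fourier coefficients of `f̄`. Since `f̄` depends only on its first `n` coordinates, only the `T`
with `σ T ⊆ {1, …, n}` contribute, and Cauchy–Schwarz bounds the square by `E[f̄²]` times the
Fourier weight of `f̄` on these `T`. A fixed `T` is mapped into `{1, …, n}` with probability at most
`(n / N)^|T| ≤ n^(-ε |T|)`. Hence the degrees above `k` contribute at most about `n^(-ε k)`, which
beats any given polynomial for large `k`, and the degrees up to `k` contribute at most
`W^{≤k}(f)`, which is negligible.
-/

section PermutationCount

lemma descFactorial_mul_pow_le {a b : ℕ} (hab : a ≤ b) (t : ℕ) :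
    a.descFactorial t * b ^ t ≤ b.descFactorial t * a ^ t := by
  induction t with
  | zero => simp
  | succ t ih =>
    have hfactor : (a - t) * b ≤ (b - t) * a := by
      rw [Nat.sub_mul, Nat.sub_mul, mul_comm b a]
      exact Nat.sub_le_sub_left (Nat.mul_le_mul_left t hab) _
    calc a.descFactorial (t + 1) * b ^ (t + 1)
        = ((a - t) * b) * (a.descFactorial t * b ^ t) := by
          rw [Nat.descFactorial_succ]; ring
      _ ≤ ((b - t) * a) * (b.descFactorial t * a ^ t) := Nat.mul_le_mul hfactor ih
      _ = b.descFactorial (t + 1) * a ^ (t + 1) := by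
          rw [Nat.descFactorial_succ]; ring

lemma choose_mul_pow_le {a b : ℕ} (hab : a ≤ b) (t : ℕ) :
    a.choose t * b ^ t ≤ b.choose t * a ^ t := by
  have h := descFactorial_mul_pow_le hab t
  rw [Nat.descFactorial_eq_factorial_mul_choose, Nat.descFactorial_eq_factorial_mul_choose,
    mul_assoc, mul_assoc] at h
  exact Nat.le_of_mul_le_mul_left h t.factorial_pos

lemma exists_perm_map_eq_of_card_eq {α : Type*} {S T : Finset α} (h : #S = #T) :
    ∃ τ : Equiv.Perm α, S.map τ.toEmbedding = T := by
  classical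
  obtain ⟨τ, hτ⟩ := (Set.powersetCard.isPretransitive (α := α) (n := #T)).exists_smul_eq
    ⟨S, h⟩ ⟨T, rfl⟩
  refine ⟨τ, ?_⟩
  rw [map_eq_image]
  exact congrArg Subtype.val hτ

variable {α : Type*} [Fintype α] [DecidableEq α]

lemma card_perm_map_subset_congr {S T : Finset α} (h : #S = #T) (A : Finset α) :
    #{σ : Equiv.Perm α | S.map σ.toEmbedding ⊆ A} =
      #{σ : Equiv.Perm α | T.map σ.toEmbedding ⊆ A} := by
  obtain ⟨τ, rfl⟩ := exists_perm_map_eq_of_card_eq h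
  refine card_equiv (Equiv.mulRight τ⁻¹) fun σ ↦ ?_
  simp [map_eq_image, image_image, Function.comp_def]

lemma card_powersetCard_filter_map_subset (σ : Equiv.Perm α) (A : Finset α) (t : ℕ) :
    #{S ∈ powersetCard t univ | S.map σ.toEmbedding ⊆ A} = (#A).choose t := by
  rw [← card_powersetCard]
  refine card_equiv (Equiv.finsetCongr σ) fun S ↦ ?_
  simp [mem_powersetCard, and_comm]

/-- Double counting of the pairs `(σ, S)` with `#S = #T` and `σ S ⊆ A`. -/
lemma card_perm_map_subset_mul_choose (T A : Finset α) :
    #{σ : Equiv.Perm α | T.map σ.toEmbedding ⊆ A} * (Fintype.card α).choose #T =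
      (#A).choose #T * Fintype.card (Equiv.Perm α) := by
  have hcount := sum_card_bipartiteAbove_eq_sum_card_bipartiteBelow
    (s := powersetCard #T univ) (t := univ)
    (fun (S : Finset α) (σ : Equiv.Perm α) ↦ S.map σ.toEmbedding ⊆ A)
  simp only [bipartiteAbove, bipartiteBelow, card_powersetCard_filter_map_subset, sum_const,
    card_univ, smul_eq_mul] at hcount
  rw [sum_congr rfl fun S hS ↦ card_perm_map_subset_congr (mem_powersetCard.1 hS).2 A] at hcount
  simpa [mul_comm] using hcount

lemma card_perm_map_subset_mul_pow_le (T A : Finset α) :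
    #{σ : Equiv.Perm α | T.map σ.toEmbedding ⊆ A} * Fintype.card α ^ #T ≤
      #A ^ #T * Fintype.card (Equiv.Perm α) := by
  refine Nat.le_of_mul_le_mul_left ?_ (Nat.choose_pos (card_le_univ T))
  calc (Fintype.card α).choose #T *
        (#{σ : Equiv.Perm α | T.map σ.toEmbedding ⊆ A} * Fintype.card α ^ #T)
      = (#A).choose #T * Fintype.card α ^ #T * Fintype.card (Equiv.Perm α) := by
        linear_combination Fintype.card α ^ #T * card_perm_map_subset_mul_choose T A
    _ ≤ (Fintype.card α).choose #T * #A ^ #T * Fintype.card (Equiv.Perm α) :=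
        Nat.mul_le_mul_right _ (choose_mul_pow_le (card_le_univ A) _)
    _ = _ := mul_assoc ..

lemma card_perm_map_subset_le (T A : Finset α) :
    (#{σ : Equiv.Perm α | T.map σ.toEmbedding ⊆ A} : ℝ) ≤
      (#A / Fintype.card α : ℝ) ^ #T * Fintype.card (Equiv.Perm α) := by
  obtain rfl | ⟨i, -⟩ := T.eq_empty_or_nonempty
  · simp [card_univ]
  have : Nonempty α := ⟨i⟩
  rw [div_pow, div_mul_eq_mul_div, le_div_iff₀ (by positivity)]
  exact_mod_cast card_perm_map_subset_mul_pow_le T A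

end PermutationCount

section Fourier

variable {n N : ℕ}

lemma bsign_mul_self (b : Bool) : bsign b * bsign b = 1 := by cases b <;> simp [bsign]

lemma bsign_not (b : Bool) : bsign (!b) = -bsign b := by cases b <;> simp [bsign]

lemma bsign_mul_bsign_of_ne {a b : Bool} (h : a ≠ b) : bsign a * bsign b = -1 := by
  rw [← Bool.not_eq.2 h.symm, bsign_not, neg_mul, bsign_mul_self]

lemma bExp_sq_nonneg (f : (Fin n → Bool) → ℝ) : 0 ≤ bExp n fun x ↦ f x ^ 2 := by
  unfold bExp
  positivity

lemma IsBooleanFn.bExp_sq {f : (Fin n → Bool) → ℝ} (hf : IsBooleanFn f) :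
    bExp n (fun x ↦ f x ^ 2) = 1 := by
  simp [bExp, fun x ↦ sq_eq_one_iff.2 (hf x)]

lemma bExp_sum_mul {ι : Type*} (s : Finset ι) (c : ι → ℝ) (g : ι → (Fin n → Bool) → ℝ) :
    bExp n (fun x ↦ ∑ i ∈ s, c i * g i x) = ∑ i ∈ s, c i * bExp n (g i) := by
  simp only [bExp, sum_comm (t := s), ← mul_sum, sum_div, mul_div_assoc]

lemma chi_map (e : Fin n ↪ Fin N) (T : Finset (Fin n)) (x : Fin N → Bool) :
    chi (T.map e) x = chi T fun i ↦ x (e i) :=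
  prod_map ..

lemma chi_update_not {S : Finset (Fin n)} {i : Fin n} (hi : i ∈ S) (x : Fin n → Bool) :
    chi S (Function.update x i (!x i)) = -chi S x := by
  have hrest : ∏ j ∈ S.erase i, bsign (Function.update x i (!x i) j) =
      ∏ j ∈ S.erase i, bsign (x j) :=
    prod_congr rfl fun j hj ↦ by rw [Function.update_of_ne (ne_of_mem_erase hj)]
  rw [chi, chi, ← mul_prod_erase S _ hi, ← mul_prod_erase S _ hi, hrest, Function.update_self,
    bsign_not, neg_mul]

lemma sum_chi_mul_chi (x y : Fin n → Bool) :
    ∑ T, chi T x * chi T y = if x = y then 2 ^ n else 0 := by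
  have hprod : ∑ T, chi T x * chi T y = ∏ i, (1 + bsign (x i) * bsign (y i)) := by
    simp only [prod_one_add, powerset_univ, chi, prod_mul_distrib]
  rw [hprod]
  split_ifs with h
  · simp [h, bsign_mul_self, one_add_one_eq_two]
  · obtain ⟨i, hi⟩ := Function.ne_iff.1 h
    exact prod_eq_zero (mem_univ i) (by rw [bsign_mul_bsign_of_ne hi, add_neg_cancel])

lemma sum_fourierCoef_mul_chi (f : (Fin n → Bool) → ℝ) (x : Fin n → Bool) :
    ∑ T, fourierCoef n f T * chi T x = f x := by
  simp_rw [fourierCoef, bExp, div_mul_eq_mul_div, sum_mul, ← sum_div]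
  rw [sum_comm]
  simp [mul_assoc, ← mul_sum, sum_chi_mul_chi]

lemma bExp_mul_eq_sum_fourierCoef (f g : (Fin n → Bool) → ℝ) :
    bExp n (fun x ↦ f x * g x) = ∑ T, fourierCoef n f T * fourierCoef n g T := by
  calc bExp n (fun x ↦ f x * g x)
      = bExp n fun x ↦ ∑ T, fourierCoef n f T * (g x * chi T x) := by
        congr! 2 with x
        rw [← sum_fourierCoef_mul_chi f x, sum_mul]
        exact sum_congr rfl fun T _ ↦ by ring
    _ = ∑ T, fourierCoef n f T * fourierCoef n g T := bExp_sum_mul ..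

lemma bExp_sq_eq_sum_fourierCoef_sq (f : (Fin n → Bool) → ℝ) :
    bExp n (fun x ↦ f x ^ 2) = ∑ T, fourierCoef n f T ^ 2 := by
  simpa only [sq] using bExp_mul_eq_sum_fourierCoef f f

/-- Flipping a coordinate in `S \ A` preserves `f` and negates `chi S`. -/
lemma fourierCoef_eq_zero_of_dependsOn {f : (Fin n → Bool) → ℝ} {A S : Finset (Fin n)}
    (hf : DependsOn f A) (hS : ¬ S ⊆ A) : fourierCoef n f S = 0 := by
  obtain ⟨i, hiS, hiA⟩ := not_subset.1 hS
  have hflip : Function.Involutive fun x : Fin n → Bool ↦ Function.update x i (!x i) :=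
    fun x ↦ by simp
  have hinv (x : Fin n → Bool) : f (Function.update x i (!x i)) = f x :=
    hf fun j hj ↦ Function.update_of_ne (ne_of_mem_of_not_mem hj hiA) ..
  have hneg : ∑ x, f x * chi S x = -∑ x, f x * chi S x := by
    rw [← sum_neg_distrib, ← Equiv.sum_comp (hflip.toPerm _)]
    simp only [Function.Involutive.coe_toPerm, hinv, chi_update_not hiS, mul_neg]
  rw [fourierCoef, bExp, self_eq_neg.1 hneg, zero_div]

lemma bExp_chi_eq_zero {S : Finset (Fin n)} (hS : S.Nonempty) : bExp n (chi S) = 0 := by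
  have hcoef : fourierCoef n (fun _ ↦ 1) S = 0 :=
    fourierCoef_eq_zero_of_dependsOn (A := ∅) (by simpa using dependsOn_const (1 : ℝ))
      (by simpa using hS.ne_empty)
  simpa only [fourierCoef, one_mul] using hcoef

/-- In the Fourier expansion of `g`, only the empty character has nonzero expectation. -/
lemma bExp_comp_embedding (g : (Fin n → Bool) → ℝ) (e : Fin n ↪ Fin N) :
    bExp N (fun x ↦ g fun i ↦ x (e i)) = bExp n g := by
  calc bExp N (fun x ↦ g fun i ↦ x (e i))
      = bExp N fun x ↦ ∑ T, fourierCoef n g T * chi (T.map e) x := by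
        simp only [chi_map, sum_fourierCoef_mul_chi]
    _ = ∑ T, fourierCoef n g T * bExp N (chi (T.map e)) := bExp_sum_mul ..
    _ = fourierCoef n g ∅ * bExp N (chi ((∅ : Finset (Fin n)).map e)) :=
        sum_eq_single_of_mem _ (mem_univ _) fun T _ hT ↦ by
          rw [bExp_chi_eq_zero ((nonempty_iff_ne_empty.2 hT).map), mul_zero]
    _ = bExp n g := by simp [fourierCoef, bExp, chi]

lemma fourierCoef_comp_embedding_map (f : (Fin n → Bool) → ℝ) (e : Fin n ↪ Fin N)
    (T : Finset (Fin n)) :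
    fourierCoef N (fun x ↦ f fun i ↦ x (e i)) (T.map e) = fourierCoef n f T := by
  simp only [fourierCoef, chi_map]
  exact bExp_comp_embedding (fun x ↦ f x * chi T x) e

lemma dependsOn_comp_embedding (f : (Fin n → Bool) → ℝ) (e : Fin n ↪ Fin N) :
    DependsOn (fun x : Fin N → Bool ↦ f fun i ↦ x (e i)) (univ.map e) :=
  fun _ _ hxy ↦ congrArg f (funext fun i ↦ hxy _ (mem_map_of_mem e (mem_univ i)))

lemma weightLE_comp_embedding (k : ℕ) (f : (Fin n → Bool) → ℝ) (e : Fin n ↪ Fin N) :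
    weightLE N k (fun x ↦ f fun i ↦ x (e i)) = weightLE n k f := by
  symm
  refine sum_of_injOn (·.map e) (map_injective e).injOn (fun T hT ↦ by simpa using hT)
    (fun S hS hSe ↦ ?_) fun T _ ↦ by rw [fourierCoef_comp_embedding_map]
  rw [fourierCoef_eq_zero_of_dependsOn (dependsOn_comp_embedding f e), zero_pow two_ne_zero]
  intro hsub
  obtain ⟨T, -, rfl⟩ := subset_map_iff.1 hsub
  exact hSe ⟨T, by simpa using hS, rfl⟩

lemma sum_fourierCoef_sq_mul_pow_le (f : (Fin n → Bool) → ℝ) {r : ℝ} (hr₀ : 0 ≤ r) (hr₁ : r ≤ 1)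
    (k : ℕ) :
    ∑ T, fourierCoef n f T ^ 2 * r ^ #T ≤ weightLE n k f + r ^ k * bExp n fun x ↦ f x ^ 2 := by
  rw [bExp_sq_eq_sum_fourierCoef_sq, weightLE, mul_sum, sum_filter, ← sum_add_distrib]
  refine sum_le_sum fun T _ ↦ ?_
  split_ifs with hT
  · have hlow : fourierCoef n f T ^ 2 * r ^ #T ≤ fourierCoef n f T ^ 2 :=
      mul_le_of_le_one_right (sq_nonneg _) (pow_le_one₀ hr₀ hr₁)
    exact hlow.trans (le_add_of_nonneg_right (by positivity))
  · have hhigh : r ^ #T ≤ r ^ k := pow_le_pow_of_le_one hr₀ hr₁ (not_le.1 hT).le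
    rw [zero_add, mul_comm]
    gcongr

end Fourier

section OrbitCP

variable {n N : ℕ}

lemma orbitCP_nonneg (f : (Fin N → Bool) → ℝ) : 0 ≤ orbitCP N f := by
  unfold orbitCP
  positivity

/-- `E[(f ∘ π) (f ∘ ρ)]` depends only on `π⁻¹ * ρ`, since relabelling the
coordinates by `π` preserves the uniform measure. -/
lemma orbitCP_eq_average (f : (Fin N → Bool) → ℝ) :
    orbitCP N f = (∑ σ : Equiv.Perm (Fin N), (bExp N fun x ↦ f x * f fun i ↦ x (σ i)) ^ 2) /
      Fintype.card (Equiv.Perm (Fin N)) := by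
  have hquot (π ρ : Equiv.Perm (Fin N)) :
      bExp N (fun x ↦ f (fun i ↦ x (π i)) * f fun i ↦ x (ρ i)) =
        bExp N fun x ↦ f x * f fun i ↦ x ((π⁻¹ * ρ) i) := by
    simpa using bExp_comp_embedding (fun x ↦ f x * f fun i ↦ x ((π⁻¹ * ρ) i)) π.toEmbedding
  have hsum (π : Equiv.Perm (Fin N)) :
      ∑ ρ : Equiv.Perm (Fin N), (bExp N fun x ↦ f (fun i ↦ x (π i)) * f fun i ↦ x (ρ i)) ^ 2 =
        ∑ σ : Equiv.Perm (Fin N), (bExp N fun x ↦ f x * f fun i ↦ x (σ i)) ^ 2 := by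
    simp only [hquot]
    exact Equiv.sum_comp (Equiv.mulLeft π⁻¹)
      fun σ : Equiv.Perm (Fin N) ↦ (bExp N fun x ↦ f x * f fun i ↦ x (σ i)) ^ 2
  rw [orbitCP, sum_congr rfl fun π _ ↦ hsum π, sum_const, card_univ, nsmul_eq_mul, sq,
    mul_div_mul_left _ _ (by positivity)]

lemma bExp_mul_comp_perm (f : (Fin N → Bool) → ℝ) (σ : Equiv.Perm (Fin N)) :
    bExp N (fun x ↦ f x * f fun i ↦ x (σ i)) =
      ∑ T : Finset (Fin N), fourierCoef N f (T.map σ.toEmbedding) * fourierCoef N f T := by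
  rw [bExp_mul_eq_sum_fourierCoef, ← Equiv.sum_comp (Equiv.finsetCongr σ)]
  exact sum_congr rfl fun T _ ↦
    congrArg _ (fourierCoef_comp_embedding_map f σ.toEmbedding T)

lemma sq_bExp_mul_comp_perm_le {f : (Fin N → Bool) → ℝ} {A : Finset (Fin N)}
    (hf : DependsOn f A) (σ : Equiv.Perm (Fin N)) :
    (bExp N fun x ↦ f x * f fun i ↦ x (σ i)) ^ 2 ≤
      (bExp N fun x ↦ f x ^ 2) *
        ∑ T : Finset (Fin N) with T.map σ.toEmbedding ⊆ A, fourierCoef N f T ^ 2 := by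
  have hsupport : ∑ T : Finset (Fin N), fourierCoef N f (T.map σ.toEmbedding) * fourierCoef N f T =
      ∑ T : Finset (Fin N) with T.map σ.toEmbedding ⊆ A,
        fourierCoef N f (T.map σ.toEmbedding) * fourierCoef N f T := by
    refine (sum_filter_of_ne fun T _ hT ↦ ?_).symm
    contrapose! hT
    rw [fourierCoef_eq_zero_of_dependsOn hf hT, zero_mul]
  have hparseval : ∑ T : Finset (Fin N) with T.map σ.toEmbedding ⊆ A,
      fourierCoef N f (T.map σ.toEmbedding) ^ 2 ≤ bExp N fun x ↦ f x ^ 2 := by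
    rw [bExp_sq_eq_sum_fourierCoef_sq, ← Equiv.sum_comp (Equiv.finsetCongr σ)]
    exact sum_le_univ_sum_of_nonneg fun _ ↦ sq_nonneg _
  rw [bExp_mul_comp_perm, hsupport]
  exact (sum_mul_sq_le_sq_mul_sq _ _ _).trans (by gcongr)

lemma orbitCP_le_of_dependsOn {f : (Fin N → Bool) → ℝ} {A : Finset (Fin N)}
    (hf : DependsOn f A) :
    orbitCP N f ≤ (bExp N fun x ↦ f x ^ 2) *
      ∑ T, fourierCoef N f T ^ 2 * (#A / N : ℝ) ^ #T := by
  have hmoment := bExp_sq_nonneg f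
  rw [orbitCP_eq_average, div_le_iff₀ (by positivity)]
  calc ∑ σ : Equiv.Perm (Fin N), (bExp N fun x ↦ f x * f fun i ↦ x (σ i)) ^ 2
      ≤ ∑ σ : Equiv.Perm (Fin N), (bExp N fun x ↦ f x ^ 2) *
          ∑ T : Finset (Fin N) with T.map σ.toEmbedding ⊆ A, fourierCoef N f T ^ 2 :=
        sum_le_sum fun σ _ ↦ sq_bExp_mul_comp_perm_le hf σ
    _ = (bExp N fun x ↦ f x ^ 2) * ∑ T, fourierCoef N f T ^ 2 *
          #{σ : Equiv.Perm (Fin N) | T.map σ.toEmbedding ⊆ A} := by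
        simp only [← mul_sum, sum_filter]
        rw [sum_comm]
        simp only [← sum_filter, sum_const, nsmul_eq_mul, mul_comm]
    _ ≤ (bExp N fun x ↦ f x ^ 2) * ∑ T, fourierCoef N f T ^ 2 *
          ((#A / N : ℝ) ^ #T * Fintype.card (Equiv.Perm (Fin N))) := by
        gcongr with T
        simpa only [Fintype.card_fin] using card_perm_map_subset_le T A
    _ = _ := by simp only [← mul_assoc, ← sum_mul]

lemma extendFn_eq_comp_castLEEmb (h : n ≤ N) (f : (Fin n → Bool) → ℝ) :
    extendFn n N f = fun x ↦ f fun i ↦ x (Fin.castLEEmb h i) := by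
  ext x
  exact congrArg f (funext fun i ↦ dif_pos (i.2.trans_le h))

lemma orbitCP_extendFn_le (h : n ≤ N) (f : (Fin n → Bool) → ℝ) (k : ℕ) :
    orbitCP N (extendFn n N f) ≤ (bExp n fun x ↦ f x ^ 2) *
      (weightLE n k f + (n / N : ℝ) ^ k * bExp n fun x ↦ f x ^ 2) := by
  have hmoment := bExp_sq_nonneg f
  have hratio : (n / N : ℝ) ≤ 1 := div_le_one_of_le₀ (by exact_mod_cast h) (by positivity)
  have hCP := orbitCP_le_of_dependsOn (dependsOn_comp_embedding f (Fin.castLEEmb h))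
  rw [bExp_comp_embedding (fun x ↦ f x ^ 2), card_map, card_univ, Fintype.card_fin] at hCP
  have hsplit := sum_fourierCoef_sq_mul_pow_le (fun x ↦ f fun i ↦ x (Fin.castLEEmb h i))
    (by positivity) hratio k
  rw [bExp_comp_embedding (fun x ↦ f x ^ 2), weightLE_comp_embedding] at hsplit
  rw [extendFn_eq_comp_castLEEmb h]
  exact hCP.trans (by gcongr)

end OrbitCP

section Asymptotics

variable {ε : ℝ} {N : ℕ → ℕ}

lemma le_of_rpow_one_add_le {n N : ℕ} (hε : 0 ≤ ε) (hn : n ≠ 0) (hN : (n : ℝ) ^ (1 + ε) ≤ N) :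
    n ≤ N := by
  have hn₁ : (1 : ℝ) ≤ n := by exact_mod_cast Nat.one_le_iff_ne_zero.2 hn
  exact_mod_cast (Real.self_le_rpow_of_one_le hn₁ (le_add_of_nonneg_right hε)).trans hN

lemma div_le_rpow_neg {n N : ℕ} (hn : n ≠ 0) (hN : (n : ℝ) ^ (1 + ε) ≤ N) :
    (n / N : ℝ) ≤ (n : ℝ) ^ (-ε) := by
  have hn₀ : (0 : ℝ) < n := by positivity
  calc (n / N : ℝ) ≤ n / (n : ℝ) ^ (1 + ε) := by gcongr
    _ = (n : ℝ) ^ (-ε) := by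
      rw [Real.rpow_add hn₀, Real.rpow_one, Real.rpow_neg hn₀.le, div_mul_cancel_left₀ hn₀.ne']

lemma tendsto_pow_mul_div_pow_zero {c k : ℕ} (hck : c < ε * k)
    (hN : ∀ᶠ n : ℕ in atTop, (n : ℝ) ^ (1 + ε) ≤ N n) :
    Tendsto (fun n : ℕ ↦ (n : ℝ) ^ c * (n / N n : ℝ) ^ k) atTop (nhds 0) := by
  have hlim : Tendsto (fun n : ℕ ↦ (n : ℝ) ^ (-(ε * k - c))) atTop (nhds 0) :=
    (tendsto_rpow_neg_atTop (sub_pos.2 hck)).comp tendsto_natCast_atTop_atTop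
  refine squeeze_zero' (.of_forall fun n ↦ by positivity) ?_ hlim
  filter_upwards [hN, eventually_ne_atTop 0] with n hNn hn
  have hn₀ : (0 : ℝ) < n := by positivity
  calc (n : ℝ) ^ c * (n / N n : ℝ) ^ k ≤ (n : ℝ) ^ c * ((n : ℝ) ^ (-ε)) ^ k := by
        gcongr
        exact div_le_rpow_neg hn hNn
    _ = (n : ℝ) ^ (-(ε * k - c)) := by
        rw [← Real.rpow_natCast, ← Real.rpow_mul_natCast hn₀.le, ← Real.rpow_add hn₀]
        ring_nf

lemma Negligible.isBigO_mul {g M : ℕ → ℝ} {d : ℕ} (hg : Negligible g)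
    (hM : M =O[atTop] fun n ↦ (n : ℝ) ^ d) : Negligible fun n ↦ M n * g n := by
  intro c
  refine ((isBigO_refl _ _).mul (hM.mul (isBigO_refl g _))).trans_tendsto ?_
  simpa only [pow_add, mul_assoc] using hg (c + d)

end Asymptotics

theorem high_degree_implies_orbitCP_negligible_general
    {ε : ℝ} (hε : 0 < ε) {N : ℕ → ℕ} (hN : ∀ᶠ n : ℕ in atTop, (n : ℝ) ^ (1 + ε) ≤ N n)
    {f : ∀ n : ℕ, (Fin n → Bool) → ℝ} {d : ℕ}
    (hf : (fun n ↦ bExp n fun x ↦ f n x ^ 2) =O[atTop] fun n : ℕ ↦ (n : ℝ) ^ d)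
    (hhd : ∀ k : ℕ, Negligible fun n ↦ weightLE n k (f n)) :
    Negligible fun n ↦ orbitCP (N n) (extendFn n (N n) (f n)) := by
  intro c
  set M : ℕ → ℝ := fun n ↦ bExp n fun x ↦ f n x ^ 2
  obtain ⟨k, hk⟩ := exists_nat_gt ((c + 2 * d : ℕ) / ε)
  rw [div_lt_iff₀' hε] at hk
  have hlow : Tendsto (fun n : ℕ ↦ (n : ℝ) ^ c * (M n * weightLE n k (f n))) atTop (nhds 0) :=
    (hhd k).isBigO_mul hf c
  have hhigh : Tendsto (fun n : ℕ ↦ (n : ℝ) ^ c * (M n ^ 2 * (n / N n : ℝ) ^ k)) atTop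
      (nhds 0) := by
    refine ((isBigO_refl _ _).mul ((hf.pow 2).mul (isBigO_refl _ _))).trans_tendsto ?_
    simpa only [pow_add, pow_mul', mul_assoc] using tendsto_pow_mul_div_pow_zero hk hN
  refine squeeze_zero' (.of_forall fun n ↦ mul_nonneg (by positivity) (orbitCP_nonneg _)) ?_
    (add_zero (0 : ℝ) ▸ hlow.add hhigh)
  filter_upwards [hN, eventually_ne_atTop 0] with n hNn hn
  calc (n : ℝ) ^ c * orbitCP (N n) (extendFn n (N n) (f n))
      ≤ (n : ℝ) ^ c * (M n * (weightLE n k (f n) + (n / N n : ℝ) ^ k * M n)) := by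
        gcongr
        exact orbitCP_extendFn_le (le_of_rpow_one_add_le hε.le hn hNn) (f n) k
    _ = _ := by ring

/-- If the Boolean family `(f_n)` is high-degree, then for every `ε > 0`,
with `N = n^{1+ε}`, the cross-predictability of the orbit of the `N`-extension of `f_n`
is negligible. -/
theorem high_degree_implies_orbitCP_negligible
    (ε : ℝ) (hε : 0 < ε)
    (f : ∀ n : ℕ, (Fin n → Bool) → ℝ) (hf : ∀ n, IsBooleanFn (f n))
    (hhd : ∀ k : ℕ, Negligible fun n => weightLE n k (f n)) :
    Negligible fun n => orbitCP (Ndim ε n) (extendFn n (Ndim ε n) (f n)) :=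
  high_degree_implies_orbitCP_negligible_general hε (d := 0) (.of_forall fun _ ↦ Nat.le_ceil _)
    (by simpa only [(hf _).bExp_sq, pow_zero] using isBigO_refl _ _) hhd
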